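/- There exists a constant C > 0, depending only on α and β, with the following property. Let (u_k, λ_k, f_k) be a sequence of real Dirichlet quasimode data on the stadium S with ‖u_k‖_{L²(S)} = 1 for all k, λ_k → ∞, and ‖f_k‖_{L²(S)} → 0 (an o(1) quasimode). Then for all sufficiently large k, ∫_{∂S ∩ W} w |∂_N u_k|² dl ≥ C. -/

import Mathlib

open MeasureTheory Real Set Filter

noncomputable section

/-- Partial derivative in the first (x) variable. -/
def pdx (u : ℝ × ℝ → ℝ) (p : ℝ × ℝ) : ℝ := deriv (fun t => u (t, p.2)) p.1

/-- Partial derivative in the second (y) variable. -/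
def pdy (u : ℝ × ℝ → ℝ) (p : ℝ × ℝ) : ℝ := deriv (fun t => u (p.1, t)) p.2

/-- The positive Laplacian `Δu = -u_xx - u_yy`. -/
def lap (u : ℝ × ℝ → ℝ) (p : ℝ × ℝ) : ℝ := -(pdx (pdx u) p) - (pdy (pdy u) p)

/-- The central rectangle `R = [-α,α] × [-β,β]`. -/
def Rect (α β : ℝ) : Set (ℝ × ℝ) := Icc (-α) α ×ˢ Icc (-β) β

/-- The wings `W = W₊ ∪ W₋`, two half-discs of radius β centered at `(±α, 0)`. -/
def Wings (α β : ℝ) : Set (ℝ × ℝ) :=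
  {p | (p.1 - α) ^ 2 + p.2 ^ 2 ≤ β ^ 2 ∧ α ≤ p.1} ∪
  {p | (p.1 + α) ^ 2 + p.2 ^ 2 ≤ β ^ 2 ∧ p.1 ≤ -α}

/-- The Bunimovich stadium `S = R ∪ W`. -/
def Stadium (α β : ℝ) : Set (ℝ × ℝ) := Rect α β ∪ Wings α β

/-- The boundary `∂S`: two horizontal segments and two semicircles. -/
def StadiumBoundary (α β : ℝ) : Set (ℝ × ℝ) :=
  {p | |p.1| ≤ α ∧ (p.2 = β ∨ p.2 = -β)} ∪
  {p | (|p.1| - α) ^ 2 + p.2 ^ 2 = β ^ 2 ∧ α ≤ |p.1|}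

/-- Boundary integral `∫_{∂S} g dl` of an integrand `g` depending on the boundary point
and the outward unit normal at that point. -/
def bdryInt (α β : ℝ) (g : ℝ × ℝ → ℝ × ℝ → ℝ) : ℝ :=
  (∫ x in (-α)..α, (g (x, β) (0, 1) + g (x, -β) (0, -1))) +
  β * ∫ θ in (-(π / 2))..(π / 2),
    (g (α + β * cos θ, β * sin θ) (cos θ, sin θ) +
     g (-(α + β * cos θ), β * sin θ) (-cos θ, sin θ))

/-- Boundary integral `∫_{∂S ∩ W} g dl` over the two semicircles only. -/
def bdryIntW (α β : ℝ) (g : ℝ × ℝ → ℝ × ℝ → ℝ) : ℝ :=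
  β * ∫ θ in (-(π / 2))..(π / 2),
    (g (α + β * cos θ, β * sin θ) (cos θ, sin θ) +
     g (-(α + β * cos θ), β * sin θ) (-cos θ, sin θ))

/-- The normal derivative `∂_N u = n₁ ∂_x u + n₂ ∂_y u` at a boundary point `p`
with outward unit normal `n`. -/
def nderiv (u : ℝ × ℝ → ℝ) (p n : ℝ × ℝ) : ℝ := n.1 * pdx u p + n.2 * pdy u p

/-- A real Dirichlet quasimode datum `(u, λ, f)` on the stadium: `λ > 0`, `u` smooth on a
neighborhood of `S`, `u = 0` on `∂S`, and `(Δ - λ²) u = f` on `S`. -/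
structure QMDatum (α β : ℝ) where
  u : ℝ × ℝ → ℝ
  lam : ℝ
  f : ℝ × ℝ → ℝ
  lam_pos : 0 < lam
  smooth : ∃ V : Set (ℝ × ℝ), IsOpen V ∧ Stadium α β ⊆ V ∧ ContDiffOn ℝ (⊤ : ℕ∞) u V
  dirichlet : ∀ p ∈ StadiumBoundary α β, u p = 0
  eqn : ∀ p ∈ Stadium α β, lap u p - lam ^ 2 * u p = f p

/-
Integrating `(Δu - λ²u)(x ∂ₓu + u / 2)` by parts over the stadium gives the Rellich-type identity
`‖∂ₓu‖² = ⟨f, x ∂ₓu + u / 2⟩ + ½ ∫_{∂S} x n₁ |∂_N u|² dl`; here `λ` drops out because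
`u (x ∂ₓu + u / 2) = ∂ₓ(x u²) / 2`. The flat sides of the boundary do not contribute since `n₁ = 0`
there, while `x n₁ ≤ (α + β) / β * w` on the wings. As `u` vanishes on `∂S`, the one-dimensional
Poincaré inequality in `x` bounds `‖u‖` by `2 (α + β) ‖∂ₓu‖`, so that `‖u‖²` is at most a constant
multiple of `‖f‖² + ∫_{∂S ∩ W} w |∂_N u|² dl`.
-/

section PartialDerivatives

variable {u v : ℝ × ℝ → ℝ} {p : ℝ × ℝ}

lemma hasDerivAt_pdx {x y : ℝ} (hv : DifferentiableAt ℝ v (x, y)) :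
    HasDerivAt (fun t => v (t, y)) (pdx v (x, y)) x :=
  (hv.comp x (f := fun t => (t, y)) (by fun_prop)).hasDerivAt

lemma hasDerivAt_pdy {x y : ℝ} (hv : DifferentiableAt ℝ v (x, y)) :
    HasDerivAt (fun t => v (x, t)) (pdy v (x, y)) y :=
  (hv.comp y (f := fun t => (x, t)) (by fun_prop)).hasDerivAt

lemma pdx_eq_fderiv (hv : DifferentiableAt ℝ v p) : pdx v p = fderiv ℝ v p (1, 0) :=
  (hv.hasFDerivAt.comp_hasDerivAt (f := fun t => (t, p.2)) p.1
    ((hasDerivAt_id _).prodMk (hasDerivAt_const _ _))).deriv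

lemma pdy_eq_fderiv (hv : DifferentiableAt ℝ v p) : pdy v p = fderiv ℝ v p (0, 1) :=
  (hv.hasFDerivAt.comp_hasDerivAt (f := fun t => (p.1, t)) p.2
    ((hasDerivAt_const _ _).prodMk (hasDerivAt_id _))).deriv

lemma contDiff_pdx {m n : WithTop ℕ∞} (hv : ContDiff ℝ n v) (hmn : m + 1 ≤ n) :
    ContDiff ℝ m (pdx v) := by
  have hd : Differentiable ℝ v := (hv.of_le (le_add_self.trans hmn)).differentiable one_ne_zero
  have he : pdx v = fun p => fderiv ℝ v p (1, 0) := funext fun p => pdx_eq_fderiv (hd p)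
  rw [he]
  exact (hv.fderiv_right hmn).clm_apply contDiff_const

lemma contDiff_pdy {m n : WithTop ℕ∞} (hv : ContDiff ℝ n v) (hmn : m + 1 ≤ n) :
    ContDiff ℝ m (pdy v) := by
  have hd : Differentiable ℝ v := (hv.of_le (le_add_self.trans hmn)).differentiable one_ne_zero
  have he : pdy v = fun p => fderiv ℝ v p (0, 1) := funext fun p => pdy_eq_fderiv (hd p)
  rw [he]
  exact (hv.fderiv_right hmn).clm_apply contDiff_const

lemma continuous_pdx (hv : ContDiff ℝ 1 v) : Continuous (pdx v) :=
  (contDiff_pdx (m := 0) hv (by simp)).continuous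

lemma continuous_pdy (hv : ContDiff ℝ 1 v) : Continuous (pdy v) :=
  (contDiff_pdy (m := 0) hv (by simp)).continuous

lemma contDiff_one_pdx (hv : ContDiff ℝ 2 v) : ContDiff ℝ 1 (pdx v) :=
  contDiff_pdx hv one_add_one_eq_two.le

lemma contDiff_one_pdy (hv : ContDiff ℝ 2 v) : ContDiff ℝ 1 (pdy v) :=
  contDiff_pdy hv one_add_one_eq_two.le

lemma continuous_lap (hv : ContDiff ℝ 2 v) : Continuous (lap v) :=
  (continuous_pdx (contDiff_one_pdx hv)).neg.sub (continuous_pdy (contDiff_one_pdy hv))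

lemma continuous_nderiv (hv : ContDiff ℝ 1 v) :
    Continuous fun q : (ℝ × ℝ) × (ℝ × ℝ) => nderiv v q.1 q.2 := by
  have hx := continuous_pdx hv
  have hy := continuous_pdy hv
  unfold nderiv
  fun_prop

lemma pdx_pdy_comm (hv : ContDiff ℝ 2 v) (p : ℝ × ℝ) : pdx (pdy v) p = pdy (pdx v) p := by
  have hd : Differentiable ℝ v := hv.differentiable two_ne_zero
  have hx : pdx v = fun q => fderiv ℝ v q (1, 0) := funext fun q => pdx_eq_fderiv (hd q)
  have hy : pdy v = fun q => fderiv ℝ v q (0, 1) := funext fun q => pdy_eq_fderiv (hd q)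
  have hd' : DifferentiableAt ℝ (fderiv ℝ v) p :=
    (hv.fderiv_right one_add_one_eq_two.le).differentiable one_ne_zero p
  have hsymm : IsSymmSndFDerivAt ℝ v p := hv.contDiffAt.isSymmSndFDerivAt (by simp)
  rw [pdx_eq_fderiv ((contDiff_one_pdy hv).differentiable one_ne_zero p),
    pdy_eq_fderiv ((contDiff_one_pdx hv).differentiable one_ne_zero p),
    hx, hy, fderiv_clm_apply hd' (by fun_prop), fderiv_clm_apply hd' (by fun_prop)]
  simpa using hsymm.eq (1, 0) (0, 1)

lemma hasDerivAt_comp_curve {a b : ℝ → ℝ} {a' b' t : ℝ}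
    (hv : DifferentiableAt ℝ v (a t, b t)) (ha : HasDerivAt a a' t) (hb : HasDerivAt b b' t) :
    HasDerivAt (fun s => v (a s, b s)) (a' * pdx v (a t, b t) + b' * pdy v (a t, b t)) t := by
  have h := hv.hasFDerivAt.comp_hasDerivAt (f := fun s => (a s, b s)) t (ha.prodMk hb)
  have he : ((a', b') : ℝ × ℝ) = a' • (1, 0) + b' • (0, 1) := by simp
  rwa [he, map_add, map_smul, map_smul, ← pdx_eq_fderiv hv, ← pdy_eq_fderiv hv] at h

lemma pdx_eq_and_pdy_eq_of_vanish_along_curve {a b : ℝ → ℝ} {c t : ℝ} {n : ℝ × ℝ}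
    (hv : DifferentiableAt ℝ v (a t, b t)) (hc : c ≠ 0) (hn : n.1 ^ 2 + n.2 ^ 2 = 1)
    (ha : HasDerivAt a (-(c * n.2)) t) (hb : HasDerivAt b (c * n.1) t)
    (h0 : ∀ᶠ s in nhds t, v (a s, b s) = 0) :
    pdx v (a t, b t) = n.1 * nderiv v (a t, b t) n ∧
      pdy v (a t, b t) = n.2 * nderiv v (a t, b t) n := by
  have htan : -(c * n.2) * pdx v (a t, b t) + c * n.1 * pdy v (a t, b t) = 0 :=
    (hasDerivAt_comp_curve hv ha hb).unique
      ((hasDerivAt_const t (0 : ℝ)).congr_of_eventuallyEq h0)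
  have htan' : n.1 * pdy v (a t, b t) = n.2 * pdx v (a t, b t) :=
    mul_left_cancel₀ hc (by linear_combination htan)
  unfold nderiv
  constructor
  · linear_combination -pdx v (a t, b t) * hn - n.2 * htan'
  · linear_combination -pdy v (a t, b t) * hn + n.1 * htan'

lemma pdx_eventuallyEq (h : v =ᶠ[nhds p] u) : pdx v =ᶠ[nhds p] pdx u := by
  filter_upwards [h.eventuallyEq_nhds] with q hq
  have hc : Continuous fun t : ℝ => (t, q.2) := by fun_prop
  exact EventuallyEq.deriv_eq ((hc.tendsto' q.1 q rfl).eventually hq)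

lemma pdy_eventuallyEq (h : v =ᶠ[nhds p] u) : pdy v =ᶠ[nhds p] pdy u := by
  filter_upwards [h.eventuallyEq_nhds] with q hq
  have hc : Continuous fun t : ℝ => (q.1, t) := by fun_prop
  exact EventuallyEq.deriv_eq ((hc.tendsto' q.2 q rfl).eventually hq)

lemma lap_congr (h : v =ᶠ[nhds p] u) : lap v p = lap u p := by
  rw [lap, lap, (pdx_eventuallyEq (pdx_eventuallyEq h)).eq_of_nhds,
    (pdy_eventuallyEq (pdy_eventuallyEq h)).eq_of_nhds]

lemma nderiv_congr (h : v =ᶠ[nhds p] u) (n : ℝ × ℝ) : nderiv v p n = nderiv u p n := by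
  rw [nderiv, nderiv, (pdx_eventuallyEq h).eq_of_nhds, (pdy_eventuallyEq h).eq_of_nhds]

end PartialDerivatives

open scoped Topology Manifold in
lemma exists_contDiff_eventuallyEq_nhdsSet {E F : Type*} [NormedAddCommGroup E] [NormedSpace ℝ E]
    [FiniteDimensional ℝ E] [NormedAddCommGroup F] [NormedSpace ℝ F] {n : ℕ∞} {K V : Set E}
    {u : E → F} (hK : IsClosed K) (hV : IsOpen V) (hKV : K ⊆ V) (hu : ContDiffOn ℝ n u V) :
    ∃ v : E → F, ContDiff ℝ n v ∧ v =ᶠ[𝓝ˢ K] u := by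
  obtain ⟨χ, hχ0, hχ1, -⟩ := exists_contMDiffMap_zero_one_nhds_of_isClosed 𝓘(ℝ, E) (n := n)
    hV.isClosed_compl hK (disjoint_compl_left_iff_subset.2 hKV)
  have hχ : ContDiff ℝ n χ := χ.contMDiff.contDiff
  refine ⟨fun p => χ p • u p, contDiff_iff_contDiffAt.2 fun p => ?_, ?_⟩
  · by_cases hp : p ∈ V
    · exact hχ.contDiffAt.smul (hu.contDiffAt (hV.mem_nhds hp))
    · refine (contDiffAt_const (c := (0 : F))).congr_of_eventuallyEq ?_
      filter_upwards [eventually_nhdsSet_iff_forall.1 hχ0 p hp] with q hq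
      rw [hq, zero_smul]
  · filter_upwards [hχ1] with q hq
    rw [hq, one_smul]

lemma setIntegral_between_graphs {E : Type*} [NormedAddCommGroup E] [NormedSpace ℝ E]
    {a b : ℝ} {g h : ℝ → ℝ} {F : ℝ × ℝ → E} (hab : a ≤ b) (hg : Measurable g) (hh : Measurable h)
    (hgh : ∀ x ∈ Icc a b, g x ≤ h x)
    (hF : IntegrableOn F {p | p.1 ∈ Icc a b ∧ p.2 ∈ Icc (g p.1) (h p.1)}) :
    ∫ p in {p : ℝ × ℝ | p.1 ∈ Icc a b ∧ p.2 ∈ Icc (g p.1) (h p.1)}, F p =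
      ∫ x in a..b, ∫ y in g x..h x, F (x, y) := by
  have hm := measurableSet_region_between_cc hg hh (measurableSet_Icc (a := a) (b := b))
  rw [← integral_indicator hm, Measure.volume_eq_prod,
    integral_prod _ ((integrable_indicator_iff hm).2 hF), intervalIntegral.integral_of_le hab,
    ← integral_Icc_eq_integral_Ioc, ← integral_indicator measurableSet_Icc]
  congr 1 with x
  by_cases hx : x ∈ Icc a b
  · rw [indicator_of_mem hx, intervalIntegral.integral_of_le (hgh x hx),
      ← integral_Icc_eq_integral_Ioc, ← integral_indicator measurableSet_Icc]
    congr 1 with y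
    simp only [indicator, mem_ofPred_eq, hx, true_and]
  · simp only [indicator, mem_ofPred_eq, hx, false_and, if_false, integral_zero]

/-! ### Geometry of the stadium -/

/-- The half-width of the horizontal slice of the stadium at height `y`, for `|y| ≤ β`. -/
def halfWidth (α β y : ℝ) : ℝ := α + √(β ^ 2 - y ^ 2)

/-- The half-height of the vertical slice of the stadium at abscissa `x`, for `|x| ≤ α + β`. -/
def halfHeight (α β x : ℝ) : ℝ := √(β ^ 2 - (max (|x| - α) 0) ^ 2)

/-- `IsWingNormal α β p n` says that `n` is the outward unit normal of the stadium at a point `p`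
in the interior of one of the two semicircles of its boundary. -/
inductive IsWingNormal (α β : ℝ) : ℝ × ℝ → ℝ × ℝ → Prop
  | right {θ : ℝ} (hθ : θ ∈ Ioo (-(π / 2)) (π / 2)) :
      IsWingNormal α β (α + β * cos θ, β * sin θ) (cos θ, sin θ)
  | left {θ : ℝ} (hθ : θ ∈ Ioo (-(π / 2)) (π / 2)) :
      IsWingNormal α β (-(α + β * cos θ), β * sin θ) (-cos θ, sin θ)

/-- `IsOuterNormal α β p n` says that `n` is the outward unit normal of the stadium at the boundary
point `p`. The points where a segment meets a semicircle, a null set for the boundary integrals, are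
left out, so that the boundary is a smooth curve around `p`. -/
inductive IsOuterNormal (α β : ℝ) : ℝ × ℝ → ℝ × ℝ → Prop
  | top {x : ℝ} (hx : x ∈ Ioo (-α) α) : IsOuterNormal α β (x, β) (0, 1)
  | bottom {x : ℝ} (hx : x ∈ Ioo (-α) α) : IsOuterNormal α β (x, -β) (0, -1)
  | wing {p n : ℝ × ℝ} (h : IsWingNormal α β p n) : IsOuterNormal α β p n

section Stadium

variable {α β : ℝ}

lemma continuous_halfWidth (α β : ℝ) : Continuous (halfWidth α β) := by
  unfold halfWidth
  fun_prop

lemma continuous_halfHeight (α β : ℝ) : Continuous (halfHeight α β) := by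
  unfold halfHeight
  fun_prop

lemma halfWidth_nonneg (hα : 0 ≤ α) (y : ℝ) : 0 ≤ halfWidth α β y :=
  add_nonneg hα (Real.sqrt_nonneg _)

lemma halfHeight_nonneg (α β x : ℝ) : 0 ≤ halfHeight α β x := Real.sqrt_nonneg _

lemma halfHeight_neg (α β x : ℝ) : halfHeight α β (-x) = halfHeight α β x := by
  rw [halfHeight, halfHeight, abs_neg]

lemma halfHeight_of_abs_le (hβ : 0 ≤ β) {x : ℝ} (hx : |x| ≤ α) : halfHeight α β x = β := by
  rw [halfHeight, max_eq_right (by linarith), zero_pow two_ne_zero, sub_zero, Real.sqrt_sq hβ]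

lemma sqrt_sq_sub_mul_sin_sq {β θ : ℝ} (hβ : 0 ≤ β) (hθ : 0 ≤ cos θ) :
    √(β ^ 2 - (β * sin θ) ^ 2) = β * cos θ := by
  rw [show β ^ 2 - (β * sin θ) ^ 2 = (β * cos θ) ^ 2 by
    linear_combination -β ^ 2 * sin_sq_add_cos_sq θ, Real.sqrt_sq (by positivity)]

lemma sqrt_sq_sub_mul_cos_sq {β θ : ℝ} (hβ : 0 ≤ β) (hθ : 0 ≤ sin θ) :
    √(β ^ 2 - (β * cos θ) ^ 2) = β * sin θ := by
  rw [show β ^ 2 - (β * cos θ) ^ 2 = (β * sin θ) ^ 2 by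
    linear_combination -β ^ 2 * sin_sq_add_cos_sq θ, Real.sqrt_sq (by positivity)]

lemma halfWidth_mul_sin (hβ : 0 ≤ β) {θ : ℝ} (hθ : θ ∈ Icc (-(π / 2)) (π / 2)) :
    halfWidth α β (β * sin θ) = α + β * cos θ := by
  rw [halfWidth, sqrt_sq_sub_mul_sin_sq hβ (cos_nonneg_of_mem_Icc hθ)]

lemma halfHeight_add_mul_cos (hα : 0 ≤ α) (hβ : 0 ≤ β) {θ : ℝ} (hθ : θ ∈ Icc 0 (π / 2)) :
    halfHeight α β (α + β * cos θ) = β * sin θ := by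
  have hcos : 0 ≤ β * cos θ :=
    mul_nonneg hβ (cos_nonneg_of_mem_Icc ⟨by linarith [hθ.1, hθ.2], hθ.2⟩)
  have hsin : 0 ≤ sin θ := sin_nonneg_of_nonneg_of_le_pi hθ.1 (by linarith [hθ.1, hθ.2])
  rw [halfHeight, abs_of_nonneg (by positivity), add_sub_cancel_left, max_eq_left hcos,
    sqrt_sq_sub_mul_cos_sq hβ hsin]

/- The stadium is the set of points at distance at most `β` from the segment `[-α, α] × {0}`, and
`max (|p.1| - α) 0` is the horizontal offset of `p` from that segment. -/
lemma mem_stadium_iff (hα : 0 ≤ α) (hβ : 0 ≤ β) {p : ℝ × ℝ} :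
    p ∈ Stadium α β ↔ (max (|p.1| - α) 0) ^ 2 + p.2 ^ 2 ≤ β ^ 2 := by
  obtain ⟨x, y⟩ := p
  simp only [Stadium, Rect, Wings, mem_union, mem_prod, mem_Icc, mem_ofPred_eq]
  constructor
  · rintro (⟨hx, hy⟩ | ⟨h, hx⟩ | ⟨h, hx⟩)
    · rw [max_eq_right (by linarith [abs_le.2 hx])]
      nlinarith
    · rwa [abs_of_nonneg (by linarith), max_eq_left (by linarith)]
    · rw [abs_of_nonpos (by linarith), max_eq_left (by linarith)]
      linarith
  · intro h
    rcases le_total |x| α with hx | hx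
    · rw [max_eq_right (by linarith)] at h
      exact Or.inl ⟨abs_le.1 hx, abs_le.1 (abs_le_of_sq_le_sq (by linarith) hβ)⟩
    · rw [max_eq_left (by linarith)] at h
      rcases abs_cases x with ⟨hx', -⟩ | ⟨hx', -⟩ <;> rw [hx'] at h hx
      · exact Or.inr (Or.inl ⟨h, hx⟩)
      · exact Or.inr (Or.inr ⟨by linarith, by linarith⟩)

lemma stadium_eq_vertical_slices (hα : 0 ≤ α) (hβ : 0 ≤ β) :
    Stadium α β = {p | p.1 ∈ Icc (-(α + β)) (α + β) ∧
      p.2 ∈ Icc (-halfHeight α β p.1) (halfHeight α β p.1)} := by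
  ext ⟨x, y⟩
  have hm : 0 ≤ max (|x| - α) 0 := le_max_right _ _
  have hx : |x| ≤ α + β ↔ (max (|x| - α) 0) ^ 2 ≤ β ^ 2 := by
    rw [sq_le_sq₀ hm hβ, max_le_iff, sub_le_iff_le_add', and_iff_left hβ]
  rw [mem_stadium_iff hα hβ, mem_ofPred_eq, mem_Icc, mem_Icc, ← abs_le, hx]
  constructor
  · intro h
    exact ⟨by nlinarith, (Real.sq_le (by nlinarith)).1 (by linarith)⟩
  · rintro ⟨h, hy⟩
    linarith [(Real.sq_le (sub_nonneg.2 h)).2 hy]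

lemma stadium_eq_horizontal_slices (hα : 0 ≤ α) (hβ : 0 ≤ β) :
    Stadium α β = Prod.swap ⁻¹' {p | p.1 ∈ Icc (-β) β ∧
      p.2 ∈ Icc (-halfWidth α β p.1) (halfWidth α β p.1)} := by
  ext ⟨x, y⟩
  have hm : 0 ≤ max (|x| - α) 0 := le_max_right _ _
  have hy : |y| ≤ β ↔ y ^ 2 ≤ β ^ 2 := by rw [← sq_le_sq₀ (abs_nonneg y) hβ, sq_abs]
  have hx : |x| ≤ halfWidth α β y ↔ max (|x| - α) 0 ≤ √(β ^ 2 - y ^ 2) := by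
    rw [halfWidth, max_le_iff, and_iff_left (Real.sqrt_nonneg _), sub_le_iff_le_add']
  simp only [mem_stadium_iff hα hβ, mem_preimage, Prod.swap_prod_mk, mem_ofPred_eq, mem_Icc,
    ← abs_le, hx, hy]
  constructor
  · intro h
    exact ⟨by nlinarith, Real.le_sqrt_of_sq_le (by linarith)⟩
  · rintro ⟨h, hx'⟩
    linarith [(Real.le_sqrt hm (sub_nonneg.2 h)).1 hx']

lemma isCompact_stadium (hα : 0 ≤ α) (hβ : 0 ≤ β) : IsCompact (Stadium α β) := by
  have hclosed : IsClosed (Stadium α β) := by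
    rw [show Stadium α β = {p | (max (|p.1| - α) 0) ^ 2 + p.2 ^ 2 ≤ β ^ 2} from
      Set.ext fun p => mem_stadium_iff hα hβ]
    exact isClosed_le (by fun_prop) (by fun_prop)
  refine (isCompact_Icc.prod isCompact_Icc).of_isClosed_subset hclosed fun p hp =>
    ⟨((stadium_eq_vertical_slices hα hβ).subset hp).1,
      ((stadium_eq_horizontal_slices hα hβ).subset hp).1⟩

lemma measurableSet_stadium (hα : 0 ≤ α) (hβ : 0 ≤ β) : MeasurableSet (Stadium α β) :=
  (isCompact_stadium hα hβ).measurableSet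

lemma integrableOn_stadium (hα : 0 ≤ α) (hβ : 0 ≤ β) {F : ℝ × ℝ → ℝ} (hF : Continuous F) :
    IntegrableOn F (Stadium α β) :=
  hF.continuousOn.integrableOn_compact (isCompact_stadium hα hβ)

lemma fst_sq_le_of_mem_stadium (hα : 0 ≤ α) (hβ : 0 ≤ β) {p : ℝ × ℝ} (hp : p ∈ Stadium α β) :
    p.1 ^ 2 ≤ (α + β) ^ 2 :=
  have hp' := ((stadium_eq_vertical_slices hα hβ).subset hp).1
  sq_le_sq' hp'.1 hp'.2

lemma stadiumBoundary_subset (hα : 0 ≤ α) (hβ : 0 ≤ β) :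
    StadiumBoundary α β ⊆ Stadium α β := by
  rintro p (⟨hx, hy⟩ | ⟨h, hx⟩) <;> rw [mem_stadium_iff hα hβ]
  · rw [max_eq_right (by linarith)]
    rcases hy with hy | hy <;> rw [hy] <;> linarith
  · rw [max_eq_left (by linarith), h]

lemma IsWingNormal.abs_fst_sub (hα : 0 ≤ α) (hβ : 0 ≤ β) {p n : ℝ × ℝ}
    (h : IsWingNormal α β p n) : |p.1| - α = β * |n.1| := by
  obtain hθ | hθ := h
  all_goals
    have hcos := cos_nonneg_of_mem_Icc (Ioo_subset_Icc_self hθ)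
    simp only [abs_neg, abs_of_nonneg hcos, abs_of_nonneg (show 0 ≤ α + β * cos _ by positivity)]
    ring

lemma IsOuterNormal.sq_add_sq {p n : ℝ × ℝ} (h : IsOuterNormal α β p n) :
    n.1 ^ 2 + n.2 ^ 2 = 1 := by
  rcases h with _ | _ | (_ | _) <;> simp

lemma IsOuterNormal.mem_stadiumBoundary (hα : 0 ≤ α) (hβ : 0 ≤ β) {p n : ℝ × ℝ}
    (h : IsOuterNormal α β p n) : p ∈ StadiumBoundary α β := by
  have hn := h.sq_add_sq
  rcases h with hx | hx | h
  · exact Or.inl ⟨(abs_lt.2 hx).le, Or.inl rfl⟩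
  · exact Or.inl ⟨(abs_lt.2 hx).le, Or.inr rfl⟩
  · have habs := h.abs_fst_sub hα hβ
    have hsnd : p.2 = β * n.2 := by rcases h with _ | _ <;> rfl
    refine Or.inr ⟨?_, sub_nonneg.1 (habs ▸ by positivity)⟩
    rw [habs, hsnd, mul_pow, sq_abs]
    linear_combination β ^ 2 * hn

lemma IsOuterNormal.mem_stadium (hα : 0 ≤ α) (hβ : 0 ≤ β) {p n : ℝ × ℝ}
    (h : IsOuterNormal α β p n) : p ∈ Stadium α β :=
  stadiumBoundary_subset hα hβ (h.mem_stadiumBoundary hα hβ)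

lemma IsOuterNormal.pdx_eq_and_pdy_eq (hα : 0 ≤ α) (hβ : 0 < β) {v : ℝ × ℝ → ℝ}
    (hv : Differentiable ℝ v) (hv0 : ∀ p ∈ StadiumBoundary α β, v p = 0) {p n : ℝ × ℝ}
    (h : IsOuterNormal α β p n) :
    pdx v p = n.1 * nderiv v p n ∧ pdy v p = n.2 * nderiv v p n := by
  have h0 {p n : ℝ × ℝ} (h : IsOuterNormal α β p n) : v p = 0 :=
    hv0 p (h.mem_stadiumBoundary hα hβ.le)
  have hn := h.sq_add_sq
  have hcos (θ : ℝ) : HasDerivAt (fun θ => α + β * cos θ) (-(β * sin θ)) θ := by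
    simpa using ((hasDerivAt_cos θ).const_mul β).const_add α
  have hsin (θ : ℝ) : HasDerivAt (fun θ => β * sin θ) (β * cos θ) θ :=
    (hasDerivAt_sin θ).const_mul β
  rcases h with @⟨x, hx⟩ | @⟨x, hx⟩ | (@⟨θ, hθ⟩ | @⟨θ, hθ⟩)
  · refine pdx_eq_and_pdy_eq_of_vanish_along_curve (a := id) (b := fun _ => β) (c := -1) (hv _)
      (by norm_num) hn (by simpa using hasDerivAt_id x) (by simpa using hasDerivAt_const x β) ?_
    filter_upwards [isOpen_Ioo.mem_nhds hx] with s hs using h0 (.top hs)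
  · refine pdx_eq_and_pdy_eq_of_vanish_along_curve (a := id) (b := fun _ => -β) (c := 1) (hv _)
      (by norm_num) hn (by simpa using hasDerivAt_id x) (by simpa using hasDerivAt_const x (-β)) ?_
    filter_upwards [isOpen_Ioo.mem_nhds hx] with s hs using h0 (.bottom hs)
  · refine pdx_eq_and_pdy_eq_of_vanish_along_curve (c := β) (hv _) hβ.ne' hn (hcos θ) (hsin θ) ?_
    filter_upwards [isOpen_Ioo.mem_nhds hθ] with s hs using h0 (.wing (.right hs))
  · refine pdx_eq_and_pdy_eq_of_vanish_along_curve (c := -β) (hv _) (neg_ne_zero.2 hβ.ne') hn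
      (by simpa using (hcos θ).neg) (by simpa using hsin θ) ?_
    filter_upwards [isOpen_Ioo.mem_nhds hθ] with s hs using h0 (.wing (.left hs))

lemma IsWingNormal.fst_mul_fst_le (hα : 0 ≤ α) (hβ : 0 < β) {p n : ℝ × ℝ}
    (h : IsWingNormal α β p n) : p.1 * n.1 ≤ (α + β) / β * (|p.1| - α) := by
  have hmem : p ∈ Stadium α β := (IsOuterNormal.wing h).mem_stadium hα hβ.le
  have hp : |p.1| ≤ α + β :=
    abs_le_of_sq_le_sq (fst_sq_le_of_mem_stadium hα hβ.le hmem) (by positivity)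
  calc p.1 * n.1 ≤ |p.1| * |n.1| := (le_abs_self _).trans_eq (abs_mul _ _)
    _ ≤ (α + β) * |n.1| := by gcongr
    _ = (α + β) / β * (|p.1| - α) := by
      rw [h.abs_fst_sub hα hβ.le]
      field_simp

/-! ### Boundary integrals -/

lemma bdryIntW_congr {g g' : ℝ × ℝ → ℝ × ℝ → ℝ}
    (h : ∀ p n, IsWingNormal α β p n → g p n = g' p n) : bdryIntW α β g = bdryIntW α β g' := by
  rw [bdryIntW, bdryIntW, intervalIntegral.integral_congr_Ioo_of_le (by linarith [pi_pos])]
  intro θ hθ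
  simp only [h _ _ (.right hθ), h _ _ (.left hθ)]

lemma bdryInt_eq_add_bdryIntW (α β : ℝ) (g : ℝ × ℝ → ℝ × ℝ → ℝ) :
    bdryInt α β g = (∫ x in (-α)..α, (g (x, β) (0, 1) + g (x, -β) (0, -1))) + bdryIntW α β g :=
  rfl

lemma bdryInt_congr (hα : 0 ≤ α) {g g' : ℝ × ℝ → ℝ × ℝ → ℝ}
    (h : ∀ p n, IsOuterNormal α β p n → g p n = g' p n) : bdryInt α β g = bdryInt α β g' := by
  rw [bdryInt_eq_add_bdryIntW, bdryInt_eq_add_bdryIntW,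
    bdryIntW_congr fun p n hn => h p n (.wing hn),
    intervalIntegral.integral_congr_Ioo_of_le (by linarith)]
  intro x hx
  simp only [h _ _ (.top hx), h _ _ (.bottom hx)]

lemma bdryInt_const_mul (α β c : ℝ) (g : ℝ × ℝ → ℝ × ℝ → ℝ) :
    bdryInt α β (fun p n => c * g p n) = c * bdryInt α β g := by
  simp only [bdryInt, ← mul_add, intervalIntegral.integral_const_mul]
  ring

lemma bdryIntW_const_mul (α β c : ℝ) (g : ℝ × ℝ → ℝ × ℝ → ℝ) :
    bdryIntW α β (fun p n => c * g p n) = c * bdryIntW α β g := by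
  simp only [bdryIntW, ← mul_add, intervalIntegral.integral_const_mul]
  ring

lemma intervalIntegrable_wings (α β : ℝ) {g : ℝ × ℝ → ℝ × ℝ → ℝ}
    (hg : Continuous fun q : (ℝ × ℝ) × (ℝ × ℝ) => g q.1 q.2) (a b : ℝ) :
    IntervalIntegrable (fun θ => g (α + β * cos θ, β * sin θ) (cos θ, sin θ) +
      g (-(α + β * cos θ), β * sin θ) (-cos θ, sin θ)) volume a b := by
  have hright := hg.comp (f := fun θ => ((α + β * cos θ, β * sin θ), (cos θ, sin θ)))
    (by fun_prop)
  have hleft := hg.comp (f := fun θ => ((-(α + β * cos θ), β * sin θ), (-cos θ, sin θ)))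
    (by fun_prop)
  exact (hright.add hleft).intervalIntegrable _ _

lemma intervalIntegrable_segments (β : ℝ) {g : ℝ × ℝ → ℝ × ℝ → ℝ}
    (hg : Continuous fun q : (ℝ × ℝ) × (ℝ × ℝ) => g q.1 q.2) (a b : ℝ) :
    IntervalIntegrable (fun x => g (x, β) (0, 1) + g (x, -β) (0, -1)) volume a b := by
  have htop := hg.comp (f := fun x : ℝ => ((x, β), ((0 : ℝ), (1 : ℝ)))) (by fun_prop)
  have hbottom := hg.comp (f := fun x : ℝ => ((x, -β), ((0 : ℝ), (-1 : ℝ)))) (by fun_prop)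
  exact (htop.add hbottom).intervalIntegrable _ _

lemma bdryIntW_mono (hβ : 0 ≤ β) {g g' : ℝ × ℝ → ℝ × ℝ → ℝ}
    (hg : Continuous fun q : (ℝ × ℝ) × (ℝ × ℝ) => g q.1 q.2)
    (hg' : Continuous fun q : (ℝ × ℝ) × (ℝ × ℝ) => g' q.1 q.2)
    (h : ∀ p n, IsWingNormal α β p n → g p n ≤ g' p n) : bdryIntW α β g ≤ bdryIntW α β g' :=
  mul_le_mul_of_nonneg_left (intervalIntegral.integral_mono_on_of_le_Ioo (by linarith [pi_pos])
    (intervalIntegrable_wings α β hg _ _) (intervalIntegrable_wings α β hg' _ _)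
    fun _ hθ => add_le_add (h _ _ (.right hθ)) (h _ _ (.left hθ))) hβ

lemma bdryInt_add (α β : ℝ) {g g' : ℝ × ℝ → ℝ × ℝ → ℝ}
    (hg : Continuous fun q : (ℝ × ℝ) × (ℝ × ℝ) => g q.1 q.2)
    (hg' : Continuous fun q : (ℝ × ℝ) × (ℝ × ℝ) => g' q.1 q.2) :
    bdryInt α β (fun p n => g p n + g' p n) = bdryInt α β g + bdryInt α β g' := by
  simp only [bdryInt, add_add_add_comm (g _ _) (g' _ _)]
  rw [intervalIntegral.integral_add (intervalIntegrable_segments β hg _ _)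
      (intervalIntegrable_segments β hg' _ _),
    intervalIntegral.integral_add (intervalIntegrable_wings α β hg _ _)
      (intervalIntegrable_wings α β hg' _ _)]
  ring

/-! ### Divergence theorem -/

lemma integral_comp_halfHeight (hα : 0 ≤ α) (hβ : 0 ≤ β) {Q : ℝ × ℝ → ℝ} (hQ : Continuous Q) :
    ∫ x in α..α + β, Q (x, halfHeight α β x) =
      ∫ θ in 0..π / 2, Q (α + β * cos θ, β * sin θ) * (β * sin θ) := by
  have hh := continuous_halfHeight α β
  have hsubst := intervalIntegral.integral_comp_mul_deriv (a := 0) (b := π / 2)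
    (f := fun θ => α + β * cos θ) (f' := fun θ => β * -sin θ)
    (g := fun x => Q (x, halfHeight α β x))
    (fun θ _ => ((hasDerivAt_cos θ).const_mul β).const_add α) (by fun_prop) (by fun_prop)
  rw [cos_zero, cos_pi_div_two, mul_one, mul_zero, add_zero] at hsubst
  rw [intervalIntegral.integral_symm, ← hsubst, ← intervalIntegral.integral_neg]
  refine intervalIntegral.integral_congr fun θ hθ => ?_
  rw [uIcc_of_le (by positivity)] at hθ
  simp only [Function.comp_apply, halfHeight_add_mul_cos hα hβ hθ, mul_neg, neg_neg]

lemma integral_right_cap (hα : 0 ≤ α) (hβ : 0 ≤ β) {Q : ℝ × ℝ → ℝ} (hQ : Continuous Q) :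
    ∫ x in α..α + β, (Q (x, halfHeight α β x) - Q (x, -halfHeight α β x)) =
      ∫ θ in (-(π / 2))..(π / 2), Q (α + β * cos θ, β * sin θ) * (β * sin θ) := by
  have hh := continuous_halfHeight α β
  have hlower : ∫ x in α..α + β, Q (x, -halfHeight α β x) =
      -∫ θ in (-(π / 2))..0, Q (α + β * cos θ, β * sin θ) * (β * sin θ) := by
    rw [integral_comp_halfHeight (Q := fun p => Q (p.1, -p.2)) hα hβ (by fun_prop),
      ← intervalIntegral.integral_neg, ← neg_zero, ← intervalIntegral.integral_comp_neg]
    simp only [neg_zero, cos_neg, sin_neg, mul_neg, neg_neg]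
  rw [intervalIntegral.integral_sub (Continuous.intervalIntegrable (by fun_prop) _ _)
    (Continuous.intervalIntegrable (by fun_prop) _ _), hlower, integral_comp_halfHeight hα hβ hQ,
    sub_neg_eq_add, add_comm, intervalIntegral.integral_add_adjacent_intervals
    (Continuous.intervalIntegrable (by fun_prop) _ _)
    (Continuous.intervalIntegrable (by fun_prop) _ _)]

lemma integral_left_cap (hα : 0 ≤ α) (hβ : 0 ≤ β) {Q : ℝ × ℝ → ℝ} (hQ : Continuous Q) :
    ∫ x in (-(α + β))..(-α), (Q (x, halfHeight α β x) - Q (x, -halfHeight α β x)) =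
      ∫ θ in (-(π / 2))..(π / 2), Q (-(α + β * cos θ), β * sin θ) * (β * sin θ) := by
  rw [← integral_right_cap (Q := fun p => Q (-p.1, p.2)) hα hβ (by fun_prop),
    ← intervalIntegral.integral_comp_neg]
  simp only [halfHeight_neg]

lemma integral_flat_part (hα : 0 ≤ α) (hβ : 0 ≤ β) (Q : ℝ × ℝ → ℝ) :
    ∫ x in (-α)..α, (Q (x, halfHeight α β x) - Q (x, -halfHeight α β x)) =
      ∫ x in (-α)..α, (Q (x, β) - Q (x, -β)) := by
  refine intervalIntegral.integral_congr fun x hx => ?_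
  rw [uIcc_of_le (by linarith)] at hx
  simp only [halfHeight_of_abs_le hβ (abs_le.2 hx)]

lemma setIntegral_stadium_eq_vertical (hα : 0 ≤ α) (hβ : 0 ≤ β) {F : ℝ × ℝ → ℝ}
    (hF : Continuous F) :
    ∫ p in Stadium α β, F p =
      ∫ x in (-(α + β))..(α + β), ∫ y in (-halfHeight α β x)..halfHeight α β x, F (x, y) := by
  have hh := continuous_halfHeight α β
  have hint := integrableOn_stadium hα hβ hF
  rw [stadium_eq_vertical_slices hα hβ] at hint ⊢
  exact setIntegral_between_graphs (g := fun x => -halfHeight α β x) (by linarith)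
    hh.neg.measurable hh.measurable (fun x _ => neg_le_self (halfHeight_nonneg α β x)) hint

lemma setIntegral_stadium_eq_horizontal (hα : 0 ≤ α) (hβ : 0 ≤ β) {F : ℝ × ℝ → ℝ}
    (hF : Continuous F) :
    ∫ p in Stadium α β, F p =
      ∫ y in (-β)..β, ∫ x in (-halfWidth α β y)..halfWidth α β y, F (x, y) := by
  have hw := continuous_halfWidth α β
  have hswap : MeasurePreserving (Prod.swap : ℝ × ℝ → ℝ × ℝ) := Measure.measurePreserving_swap
  have hemb : MeasurableEmbedding (Prod.swap : ℝ × ℝ → ℝ × ℝ) :=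
    MeasurableEquiv.prodComm.measurableEmbedding
  have hint : IntegrableOn (fun p => F p.swap) (Prod.swap ⁻¹' Stadium α β) :=
    (hswap.integrableOn_comp_preimage hemb).2 (integrableOn_stadium hα hβ hF)
  rw [← hswap.setIntegral_preimage_emb hemb]
  rw [stadium_eq_horizontal_slices hα hβ, ← preimage_comp, Prod.swap_swap_eq, preimage_id]
    at hint ⊢
  exact setIntegral_between_graphs (g := fun y => -halfWidth α β y) (by linarith)
    hw.neg.measurable hw.measurable (fun y _ => neg_le_self (halfWidth_nonneg hα y)) hint

lemma integral_pdx_stadium (hα : 0 ≤ α) (hβ : 0 ≤ β) {P : ℝ × ℝ → ℝ} (hP : ContDiff ℝ 1 P) :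
    ∫ p in Stadium α β, pdx P p = bdryInt α β fun p n => n.1 * P p := by
  have hPc := hP.continuous
  have hPx := continuous_pdx hP
  have hw := continuous_halfWidth α β
  have hslice (y : ℝ) : ∫ x in (-halfWidth α β y)..halfWidth α β y, pdx P (x, y) =
      P (halfWidth α β y, y) - P (-halfWidth α β y, y) :=
    intervalIntegral.integral_eq_sub_of_hasDerivAt
      (fun x _ => hasDerivAt_pdx (hP.differentiable one_ne_zero _))
      (Continuous.intervalIntegrable (by fun_prop) _ _)
  have hsubst := intervalIntegral.integral_comp_mul_deriv (a := -(π / 2)) (b := π / 2)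
    (g := fun y => P (halfWidth α β y, y) - P (-halfWidth α β y, y))
    (fun θ _ => (hasDerivAt_sin θ).const_mul β) (by fun_prop) (by fun_prop)
  rw [sin_neg, sin_pi_div_two, mul_neg, mul_one] at hsubst
  simp only [setIntegral_stadium_eq_horizontal hα hβ hPx, hslice]
  rw [← hsubst, bdryInt_eq_add_bdryIntW, bdryIntW, ← intervalIntegral.integral_const_mul]
  simp only [zero_mul, add_zero, intervalIntegral.integral_zero, zero_add]
  refine intervalIntegral.integral_congr fun θ hθ => ?_
  rw [uIcc_of_le (by linarith [pi_pos])] at hθ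
  simp only [Function.comp_apply, halfWidth_mul_sin hβ hθ]
  ring

lemma integral_pdy_stadium (hα : 0 ≤ α) (hβ : 0 ≤ β) {Q : ℝ × ℝ → ℝ} (hQ : ContDiff ℝ 1 Q) :
    ∫ p in Stadium α β, pdy Q p = bdryInt α β fun p n => n.2 * Q p := by
  have hQc := hQ.continuous
  have hQy := continuous_pdy hQ
  have hh := continuous_halfHeight α β
  have hslice (x : ℝ) : ∫ y in (-halfHeight α β x)..halfHeight α β x, pdy Q (x, y) =
      Q (x, halfHeight α β x) - Q (x, -halfHeight α β x) :=
    intervalIntegral.integral_eq_sub_of_hasDerivAt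
      (fun y _ => hasDerivAt_pdy (hQ.differentiable one_ne_zero _))
      (Continuous.intervalIntegrable (by fun_prop) _ _)
  have hII (a b : ℝ) : IntervalIntegrable
      (fun x => Q (x, halfHeight α β x) - Q (x, -halfHeight α β x)) volume a b :=
    Continuous.intervalIntegrable (by fun_prop) _ _
  simp only [setIntegral_stadium_eq_vertical hα hβ hQy, hslice]
  rw [← intervalIntegral.integral_add_adjacent_intervals (hII _ α) (hII _ _),
    ← intervalIntegral.integral_add_adjacent_intervals (hII _ (-α)) (hII _ _),
    integral_left_cap hα hβ hQc, integral_flat_part hα hβ, integral_right_cap hα hβ hQc,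
    bdryInt, add_right_comm, add_comm, ← intervalIntegral.integral_add
    (Continuous.intervalIntegrable (by fun_prop) _ _)
    (Continuous.intervalIntegrable (by fun_prop) _ _), ← intervalIntegral.integral_const_mul]
  congr 1 <;> congr 1 with t <;> dsimp only <;> ring

lemma integral_div_stadium (hα : 0 ≤ α) (hβ : 0 ≤ β) {P Q : ℝ × ℝ → ℝ} (hP : ContDiff ℝ 1 P)
    (hQ : ContDiff ℝ 1 Q) :
    ∫ p in Stadium α β, (pdx P p + pdy Q p) =
      bdryInt α β fun p n => n.1 * P p + n.2 * Q p := by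
  have hPc := hP.continuous
  have hQc := hQ.continuous
  rw [integral_add (integrableOn_stadium hα hβ (continuous_pdx hP))
      (integrableOn_stadium hα hβ (continuous_pdy hQ)), integral_pdx_stadium hα hβ hP,
    integral_pdy_stadium hα hβ hQ, bdryInt_add α β (by fun_prop) (by fun_prop)]

/-! ### Poincaré inequality and Rellich identity -/

lemma integral_sq_le_integral_pdx_sq (hα : 0 ≤ α) (hβ : 0 ≤ β) {v : ℝ × ℝ → ℝ}
    (hv : ContDiff ℝ 1 v) (hv0 : ∀ p ∈ StadiumBoundary α β, v p = 0) :
    ∫ p in Stadium α β, v p ^ 2 ≤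
      4 * (α + β) ^ 2 * ∫ p in Stadium α β, (pdx v p) ^ 2 := by
  have hvc := hv.continuous
  have hvx := continuous_pdx hv
  have hdiv (p : ℝ × ℝ) : pdx (fun q => q.1 * v q ^ 2) p = v p ^ 2 + 2 * (p.1 * v p * pdx v p) := by
    have hd := hasDerivAt_pdx (x := p.1) (y := p.2) (hv.differentiable one_ne_zero _)
    refine ((hasDerivAt_id p.1).mul (hd.pow 2)).deriv.trans ?_
    simp only [id, Pi.pow_apply, Nat.cast_ofNat]
    ring
  have hzero : ∫ p in Stadium α β, (v p ^ 2 + 2 * (p.1 * v p * pdx v p)) = 0 := by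
    simp only [← hdiv]
    rw [integral_pdx_stadium hα hβ (by fun_prop), bdryInt_congr (g' := fun _ _ => 0) hα
      fun p n h => by simp [hv0 p (h.mem_stadiumBoundary hα hβ)]]
    simp [bdryInt]
  have hmono : ∫ p in Stadium α β, (1 / 2 * v p ^ 2 - 2 * (α + β) ^ 2 * (pdx v p) ^ 2) ≤
      ∫ p in Stadium α β, (v p ^ 2 + 2 * (p.1 * v p * pdx v p)) := by
    refine setIntegral_mono_on (integrableOn_stadium hα hβ (by fun_prop))
      (integrableOn_stadium hα hβ (by fun_prop)) (measurableSet_stadium hα hβ) fun p hp => ?_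
    have hx := mul_le_mul_of_nonneg_right (fst_sq_le_of_mem_stadium hα hβ hp) (sq_nonneg (pdx v p))
    nlinarith [sq_nonneg (v p + 2 * p.1 * pdx v p)]
  rw [hzero, integral_sub (integrableOn_stadium hα hβ (by fun_prop))
    (integrableOn_stadium hα hβ (by fun_prop)), integral_const_mul, integral_const_mul] at hmono
  linarith

/-- The first component of the Rellich vector field, obtained from `(Δv - μv)(x ∂ₓv + v / 2)` by
integrating by parts: see `pdx_rellichFst_add_pdy_rellichSnd` for its divergence. -/
def rellichFst (μ : ℝ) (v : ℝ × ℝ → ℝ) (p : ℝ × ℝ) : ℝ :=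
  1 / 2 * (p.1 * (pdy v p ^ 2 - pdx v p ^ 2 - μ * v p ^ 2) - v p * pdx v p)

/-- The second component of the Rellich vector field of `rellichFst`. -/
def rellichSnd (v : ℝ × ℝ → ℝ) (p : ℝ × ℝ) : ℝ :=
  -(p.1 * (pdx v p * pdy v p)) - 1 / 2 * (v p * pdy v p)

lemma contDiff_rellichFst (μ : ℝ) {v : ℝ × ℝ → ℝ} (hv : ContDiff ℝ 2 v) :
    ContDiff ℝ 1 (rellichFst μ v) := by
  have hv1 := hv.of_le one_le_two
  have hvx := contDiff_one_pdx hv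
  have hvy := contDiff_one_pdy hv
  unfold rellichFst
  fun_prop

lemma contDiff_rellichSnd {v : ℝ × ℝ → ℝ} (hv : ContDiff ℝ 2 v) :
    ContDiff ℝ 1 (rellichSnd v) := by
  have hv1 := hv.of_le one_le_two
  have hvx := contDiff_one_pdx hv
  have hvy := contDiff_one_pdy hv
  unfold rellichSnd
  fun_prop

lemma pdx_rellichFst_add_pdy_rellichSnd (μ : ℝ) {v : ℝ × ℝ → ℝ} (hv : ContDiff ℝ 2 v)
    (p : ℝ × ℝ) :
    pdx (rellichFst μ v) p + pdy (rellichSnd v) p =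
      (lap v p - μ * v p) * (p.1 * pdx v p + 1 / 2 * v p) - pdx v p ^ 2 := by
  obtain ⟨x, y⟩ := p
  have hd := hv.differentiable two_ne_zero (x, y)
  have hdx := (contDiff_one_pdx hv).differentiable one_ne_zero (x, y)
  have hdy := (contDiff_one_pdy hv).differentiable one_ne_zero (x, y)
  have hx : pdx (rellichFst μ v) (x, y) = _ :=
    ((((hasDerivAt_id x).mul ((((hasDerivAt_pdx hdy).pow 2).sub ((hasDerivAt_pdx hdx).pow 2)).sub
      (((hasDerivAt_pdx hd).pow 2).const_mul μ))).sub
      ((hasDerivAt_pdx hd).mul (hasDerivAt_pdx hdx))).const_mul (1 / 2)).deriv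
  have hy : pdy (rellichSnd v) (x, y) = _ :=
    ((((hasDerivAt_pdy hdx).mul (hasDerivAt_pdy hdy)).const_mul x).neg.sub
      (((hasDerivAt_pdy hd).mul (hasDerivAt_pdy hdy)).const_mul (1 / 2))).deriv
  rw [hx, hy, lap, pdx_pdy_comm hv]
  simp only [id, Pi.pow_apply, Pi.sub_apply, Nat.cast_ofNat]
  ring

lemma IsOuterNormal.rellich_flux (hα : 0 ≤ α) (hβ : 0 < β) (μ : ℝ) {v : ℝ × ℝ → ℝ}
    (hv : Differentiable ℝ v) (hv0 : ∀ p ∈ StadiumBoundary α β, v p = 0) {p n : ℝ × ℝ}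
    (h : IsOuterNormal α β p n) :
    n.1 * rellichFst μ v p + n.2 * rellichSnd v p =
      -(1 / 2) * (p.1 * n.1 * nderiv v p n ^ 2) := by
  obtain ⟨hx, hy⟩ := h.pdx_eq_and_pdy_eq hα hβ hv hv0
  rw [rellichFst, rellichSnd, hv0 p (h.mem_stadiumBoundary hα hβ.le), hx, hy]
  linear_combination -(1 / 2) * (p.1 * n.1 * nderiv v p n ^ 2) * h.sq_add_sq

lemma rellich_identity (hα : 0 ≤ α) (hβ : 0 < β) (μ : ℝ) {v : ℝ × ℝ → ℝ} (hv : ContDiff ℝ 2 v)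
    (hv0 : ∀ p ∈ StadiumBoundary α β, v p = 0) :
    ∫ p in Stadium α β, pdx v p ^ 2 =
      (∫ p in Stadium α β, (lap v p - μ * v p) * (p.1 * pdx v p + 1 / 2 * v p)) +
        1 / 2 * bdryInt α β fun p n => p.1 * n.1 * nderiv v p n ^ 2 := by
  have hvc := hv.continuous
  have hvx := continuous_pdx (hv.of_le one_le_two)
  have hlap := continuous_lap hv
  have hdiv := integral_div_stadium hα hβ.le (contDiff_rellichFst μ hv) (contDiff_rellichSnd hv)
  simp only [pdx_rellichFst_add_pdy_rellichSnd μ hv] at hdiv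
  rw [integral_sub (integrableOn_stadium hα hβ.le (by fun_prop))
    (integrableOn_stadium hα hβ.le (by fun_prop)), bdryInt_congr hα fun p n h =>
      h.rellich_flux hα hβ μ (hv.differentiable two_ne_zero) hv0, bdryInt_const_mul] at hdiv
  linarith

lemma bdryInt_rellich_flux_le (hα : 0 ≤ α) (hβ : 0 < β) {v : ℝ × ℝ → ℝ} (hv : ContDiff ℝ 1 v) :
    bdryInt α β (fun p n => p.1 * n.1 * nderiv v p n ^ 2) ≤
      (α + β) / β * bdryIntW α β fun p n => (|p.1| - α) * nderiv v p n ^ 2 := by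
  have hn := continuous_nderiv hv
  have hflat : bdryInt α β (fun p n => p.1 * n.1 * nderiv v p n ^ 2) =
      bdryIntW α β fun p n => p.1 * n.1 * nderiv v p n ^ 2 := by
    simp [bdryInt_eq_add_bdryIntW]
  rw [hflat, ← bdryIntW_const_mul]
  refine bdryIntW_mono hβ.le (by fun_prop) (by fun_prop) fun p n h => ?_
  rw [← mul_assoc]
  exact mul_le_mul_of_nonneg_right (h.fst_mul_fst_le hα hβ) (sq_nonneg _)

lemma mul_add_half_mul_le {M x a b c : ℝ} (hM : 0 < M) (hx : x ^ 2 ≤ M ^ 2) :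
    c * (x * a + 1 / 2 * b) ≤
      3 / 2 * M ^ 2 * c ^ 2 + 1 / 2 * a ^ 2 + 1 / (16 * M ^ 2) * b ^ 2 := by
  have ha : c * (x * a) ≤ 1 / 2 * M ^ 2 * c ^ 2 + 1 / 2 * a ^ 2 := by
    nlinarith [sq_nonneg (x * c - a), mul_le_mul_of_nonneg_right hx (sq_nonneg c)]
  have hb : 0 ≤ (M * c - b / (4 * M)) ^ 2 := sq_nonneg _
  have hb' : (M * c - b / (4 * M)) ^ 2 =
      M ^ 2 * c ^ 2 + 1 / (16 * M ^ 2) * b ^ 2 - c * (1 / 2 * b) := by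
    field_simp
    ring
  linarith

lemma integral_sq_le_of_contDiff (hα : 0 ≤ α) (hβ : 0 < β) (μ : ℝ) {v : ℝ × ℝ → ℝ}
    (hv : ContDiff ℝ 2 v) (hv0 : ∀ p ∈ StadiumBoundary α β, v p = 0) :
    ∫ p in Stadium α β, v p ^ 2 ≤
      24 * (α + β) ^ 4 * (∫ p in Stadium α β, (lap v p - μ * v p) ^ 2) +
        8 * (α + β) ^ 3 / β * bdryIntW α β fun p n => (|p.1| - α) * nderiv v p n ^ 2 := by
  have hM : 0 < α + β := by positivity
  have hv1 := hv.of_le one_le_two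
  have hvc := hv.continuous
  have hvx := continuous_pdx hv1
  have hlap := continuous_lap hv
  have hint {F : ℝ × ℝ → ℝ} (hF : Continuous F) : IntegrableOn F (Stadium α β) :=
    integrableOn_stadium hα hβ.le hF
  have hyoung : ∫ p in Stadium α β, (lap v p - μ * v p) * (p.1 * pdx v p + 1 / 2 * v p) ≤
      3 / 2 * (α + β) ^ 2 * (∫ p in Stadium α β, (lap v p - μ * v p) ^ 2) +
        1 / 2 * (∫ p in Stadium α β, pdx v p ^ 2) +
        1 / (16 * (α + β) ^ 2) * ∫ p in Stadium α β, v p ^ 2 := by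
    simp only [← integral_const_mul]
    rw [← integral_add (hint (by fun_prop)) (hint (by fun_prop)),
      ← integral_add (hint (by fun_prop)) (hint (by fun_prop))]
    exact setIntegral_mono_on (hint (by fun_prop)) (hint (by fun_prop))
      (measurableSet_stadium hα hβ.le) fun p hp =>
        mul_add_half_mul_le hM (fst_sq_le_of_mem_stadium hα hβ.le hp)
  have hpoincare := integral_sq_le_integral_pdx_sq hα hβ.le hv1 hv0
  have habsorb : 1 / (16 * (α + β) ^ 2) * ∫ p in Stadium α β, v p ^ 2 ≤
      1 / 4 * ∫ p in Stadium α β, pdx v p ^ 2 := by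
    refine (mul_le_mul_of_nonneg_left hpoincare (by positivity)).trans_eq ?_
    field_simp
    ring
  have hrellich := rellich_identity hα hβ μ hv hv0
  have hflux := bdryInt_rellich_flux_le hα hβ hv1
  have hpdx : ∫ p in Stadium α β, pdx v p ^ 2 ≤
      6 * (α + β) ^ 2 * (∫ p in Stadium α β, (lap v p - μ * v p) ^ 2) +
        2 * ((α + β) / β * bdryIntW α β fun p n => (|p.1| - α) * nderiv v p n ^ 2) := by
    linarith
  refine hpoincare.trans ((mul_le_mul_of_nonneg_left hpdx (by positivity)).trans_eq ?_)
  ring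

lemma QMDatum.integral_sq_le (hα : 0 ≤ α) (hβ : 0 < β) (d : QMDatum α β) :
    ∫ p in Stadium α β, d.u p ^ 2 ≤
      24 * (α + β) ^ 4 * (∫ p in Stadium α β, d.f p ^ 2) +
        8 * (α + β) ^ 3 / β * bdryIntW α β fun p n => (|p.1| - α) * nderiv d.u p n ^ 2 := by
  have hS := isCompact_stadium hα hβ.le
  have hm := measurableSet_stadium hα hβ.le
  obtain ⟨V, hV, hSV, hu⟩ := d.smooth
  obtain ⟨v, hv, hvu⟩ := exists_contDiff_eventuallyEq_nhdsSet hS.isClosed hV hSV hu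
  have hnhds (p) (hp : p ∈ Stadium α β) : v =ᶠ[nhds p] d.u :=
    eventually_nhdsSet_iff_forall.1 hvu p hp
  have heq (p) (hp : p ∈ Stadium α β) : v p = d.u p := (hnhds p hp).eq_of_nhds
  have hf (p) (hp : p ∈ Stadium α β) : lap v p - d.lam ^ 2 * v p = d.f p := by
    rw [lap_congr (hnhds p hp), heq p hp, d.eqn p hp]
  have hv0 (p) (hp : p ∈ StadiumBoundary α β) : v p = 0 :=
    (heq p (stadiumBoundary_subset hα hβ.le hp)).trans (d.dirichlet p hp)
  have key := integral_sq_le_of_contDiff hα hβ (d.lam ^ 2) (mod_cast contDiff_infty.1 hv 2) hv0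
  rwa [setIntegral_congr_fun hm fun p hp => congrArg (· ^ 2) (heq p hp),
    setIntegral_congr_fun hm fun p hp => congrArg (· ^ 2) (hf p hp),
    bdryIntW_congr fun p n h => congrArg (fun c => (|p.1| - α) * c ^ 2)
      (nderiv_congr (hnhds p ((IsOuterNormal.wing h).mem_stadium hα hβ.le)) n)] at key

theorem stmt3_general (hα : 0 ≤ α) (hβ : 0 < β) :
    ∃ C > 0, ∃ ε > 0, ∀ d : QMDatum α β, (∫ p in Stadium α β, d.u p ^ 2) = 1 →
      √(∫ p in Stadium α β, d.f p ^ 2) < ε →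
      C ≤ bdryIntW α β fun p n => (|p.1| - α) * nderiv d.u p n ^ 2 := by
  refine ⟨β / (16 * (α + β) ^ 3), by positivity, 1 / (7 * (α + β) ^ 2), by positivity,
    fun d hu hf => ?_⟩
  have hf' : 24 * (α + β) ^ 4 * (∫ p in Stadium α β, d.f p ^ 2) ≤ 1 / 2 := by
    have hlt := (Real.sqrt_lt' (by positivity)).1 hf
    calc 24 * (α + β) ^ 4 * (∫ p in Stadium α β, d.f p ^ 2)
      _ ≤ 24 * (α + β) ^ 4 * (1 / (7 * (α + β) ^ 2)) ^ 2 := by gcongr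
      _ = 24 / 49 := by
        field_simp
        norm_num
      _ ≤ 1 / 2 := by norm_num
  have hhalf : 1 / 2 ≤ 8 * (α + β) ^ 3 / β *
      bdryIntW α β fun p n => (|p.1| - α) * nderiv d.u p n ^ 2 := by
    linarith [d.integral_sq_le hα hβ]
  calc β / (16 * (α + β) ^ 3) = β / (8 * (α + β) ^ 3) * (1 / 2) := by
        field_simp
        norm_num
    _ ≤ β / (8 * (α + β) ^ 3) * (8 * (α + β) ^ 3 / β *
        bdryIntW α β fun p n => (|p.1| - α) * nderiv d.u p n ^ 2) := by gcongr
    _ = _ := by field_simp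

end Stadium

/-- There is `C > 0` depending only on `α, β` such that for every sequence of
real Dirichlet quasimode data with `‖u_k‖_{L²(S)} = 1`, `λ_k → ∞` and `‖f_k‖_{L²(S)} → 0`
(an `o(1)` quasimode), one has `∫_{∂S ∩ W} w |∂_N u_k|² dl ≥ C` for all large `k`. -/
theorem stmt3 (α β : ℝ) (hα : 0 < α) (hβ : 0 < β) :
    ∃ C > 0, ∀ d : ℕ → QMDatum α β,
      (∀ k, (∫ p in Stadium α β, ((d k).u p) ^ 2) = 1) →
      Tendsto (fun k => (d k).lam) atTop atTop →
      Tendsto (fun k => Real.sqrt (∫ p in Stadium α β, ((d k).f p) ^ 2)) atTop (nhds 0) →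
      ∀ᶠ k in atTop,
        bdryIntW α β (fun p n => (|p.1| - α) * (nderiv (d k).u p n) ^ 2) ≥ C := by
  obtain ⟨C, hC, ε, hε, h⟩ := stmt3_general hα.le hβ
  exact ⟨C, hC, fun d hu _ hf => (hf.eventually_lt_const hε).mono fun k hk => h (d k) (hu k) hk⟩
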